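/- arXiv:1012.0827 — 2 statements merged into one kernel-verified Lean document; each statement's English description precedes it below -/
import Mathlib

section
/- There exists a 3-piece dissection of the 3×1 rectangle into a square: there are three closed subsets P₁,P₂,P₃ of ℝ² whose union is the rectangle [0,3]×[0,1], whose interiors are pairwise disjoint, together with three isometries g₁,g₂,g₃ of ℝ² such that the images g₁(P₁),g₂(P₂),g₃(P₃) have pairwise disjoint interiors and their union is the square [0,√3]×[0,√3]. -/
open Real Set

/-- The plane. -/
abbrev Plane := EuclideanSpace ℝ (Fin 2)

/-- The axis-aligned closed rectangle `[a,b] × [c,d]` in the plane. -/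
noncomputable def rect (a b c d : ℝ) : Set Plane :=
  {p | p 0 ∈ Set.Icc a b ∧ p 1 ∈ Set.Icc c d}

/-- The linear functional `p ↦ a * p 0 + b * p 1` on the plane. -/
noncomputable def planeFunctional (a b : ℝ) : Plane →L[ℝ] ℝ :=
  a • EuclideanSpace.proj 0 + b • EuclideanSpace.proj 1

theorem planeFunctional_apply (a b : ℝ) (p : Plane) :
    planeFunctional a b p = a * p 0 + b * p 1 := by
  simp [planeFunctional]

/-- Two sets lying on opposite sides of the level set of a nonzero continuous linear functional
have disjoint interiors. -/
theorem interior_inter_interior_eq_empty_of_separated {E : Type*} [NormedAddCommGroup E]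
    [NormedSpace ℝ E] (f : E →L[ℝ] ℝ) (hf : f ≠ 0) (c : ℝ) {S T : Set E}
    (hS : ∀ p ∈ S, f p ≤ c) (hT : ∀ p ∈ T, c ≤ f p) : interior S ∩ interior T = ∅ := by
  have hopen : IsOpenMap f := f.isOpenMap_of_ne_zero hf
  have h : interior S ∩ interior T ⊆ f ⁻¹' interior {c} := by
    rw [← interior_inter, hopen.preimage_interior_eq_interior_preimage f.continuous]
    exact interior_mono fun p hp => le_antisymm (hS p hp.1) (hT p hp.2)
  simpa using h

theorem planeFunctional_ne_zero {a b : ℝ} (h : a ≠ 0 ∨ b ≠ 0) : planeFunctional a b ≠ 0 := by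
  intro h0
  have h1 := planeFunctional_apply a b !₂[1, 0]
  have h2 := planeFunctional_apply a b !₂[0, 1]
  simp [h0] at h1 h2
  grind

theorem interior_inter_interior_eq_empty_of_line (a b c : ℝ) (h : a ≠ 0 ∨ b ≠ 0)
    {S T : Set Plane} (hS : ∀ p ∈ S, a * p 0 + b * p 1 ≤ c)
    (hT : ∀ p ∈ T, c ≤ a * p 0 + b * p 1) : interior S ∩ interior T = ∅ :=
  interior_inter_interior_eq_empty_of_separated _ (planeFunctional_ne_zero h) c
    (fun p hp => (planeFunctional_apply a b p).trans_le (hS p hp))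
    (fun p hp => (hT p hp).trans_eq (planeFunctional_apply a b p).symm)

theorem interior_inter_interior_eq_empty_fin_three {X : Type*} [TopologicalSpace X]
    {P : Fin 3 → Set X} (h01 : interior (P 0) ∩ interior (P 1) = ∅)
    (h02 : interior (P 0) ∩ interior (P 2) = ∅) (h12 : interior (P 1) ∩ interior (P 2) = ∅) :
    ∀ i j, i ≠ j → interior (P i) ∩ interior (P j) = ∅ := by
  intro i j hij
  fin_cases i <;> fin_cases j <;> first | exact absurd rfl hij | assumption |
    (rw [inter_comm]; assumption)

theorem iUnion_fin_three {X : Type*} (P : Fin 3 → Set X) : ⋃ i, P i = P 0 ∪ P 1 ∪ P 2 := by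
  ext x
  simp [Fin.exists_fin_succ, or_assoc]

/-- The pieces of the P-slide of the `3 × 1` rectangle, where `s = √3`: the line
`x + s * y = 3` cuts off the upper right triangle, and the line `x = s` cuts what remains. -/
def slidePiece (s : ℝ) : Fin 3 → Set Plane :=
  ![{p | (0 ≤ p 0 ∧ p 0 ≤ s) ∧ (0 ≤ p 1 ∧ p 1 ≤ 1) ∧ p 0 + s * p 1 ≤ 3},
    {p | s ≤ p 0 ∧ 0 ≤ p 1 ∧ p 0 + s * p 1 ≤ 3},
    {p | p 0 ≤ 3 ∧ p 1 ≤ 1 ∧ 3 ≤ p 0 + s * p 1}]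

/-- The translation vectors of the P-slide; the last two are parallel to `x + s * y = 3`. -/
noncomputable def slideVector (s : ℝ) : Fin 3 → Plane :=
  ![0, !₂[-s, 1], !₂[s - 3, s - 1]]

theorem isClosed_slidePiece (s : ℝ) (i : Fin 3) : IsClosed (slidePiece s i) := by
  have h0 : Continuous fun p : Plane => p 0 := by fun_prop
  have h1 : Continuous fun p : Plane => p 1 := by fun_prop
  have hf : Continuous fun p : Plane => p 0 + s * p 1 := by fun_prop
  fin_cases i
  · exact ((isClosed_le continuous_const h0).inter (isClosed_le h0 continuous_const)).inter
      (((isClosed_le continuous_const h1).inter (isClosed_le h1 continuous_const)).inter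
        (isClosed_le hf continuous_const))
  · exact (isClosed_le continuous_const h0).inter
      ((isClosed_le continuous_const h1).inter (isClosed_le hf continuous_const))
  · exact (isClosed_le h0 continuous_const).inter
      ((isClosed_le h1 continuous_const).inter (isClosed_le continuous_const hf))

theorem image_slidePiece_zero (s : ℝ) :
    IsometryEquiv.addRight (slideVector s 0) '' slidePiece s 0 = slidePiece s 0 := by
  simp [slideVector]

theorem image_slidePiece_one (s : ℝ) :
    IsometryEquiv.addRight (slideVector s 1) '' slidePiece s 1 =
      {p | 0 ≤ p 0 ∧ 1 ≤ p 1 ∧ p 0 + s * p 1 ≤ 3} := by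
  rw [← IsometryEquiv.preimage_symm]
  ext p
  simp only [slidePiece, slideVector, IsometryEquiv.addRight_symm, mem_preimage,
    IsometryEquiv.addRight_apply, Matrix.cons_val, mem_ofPred_eq, PiLp.add_apply, PiLp.neg_apply]
  constructor <;> rintro ⟨h0, h1, h⟩ <;> refine ⟨?_, ?_, ?_⟩ <;> linarith

theorem image_slidePiece_two {s : ℝ} (hs : s * s = 3) :
    IsometryEquiv.addRight (slideVector s 2) '' slidePiece s 2 =
      {p | p 0 ≤ s ∧ p 1 ≤ s ∧ 3 ≤ p 0 + s * p 1} := by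
  rw [← IsometryEquiv.preimage_symm]
  ext p
  simp only [slidePiece, slideVector, IsometryEquiv.addRight_symm, mem_preimage,
    IsometryEquiv.addRight_apply, Matrix.cons_val, mem_ofPred_eq, PiLp.add_apply, PiLp.neg_apply]
  constructor <;> rintro ⟨h0, h1, h⟩ <;> refine ⟨?_, ?_, ?_⟩ <;> linarith

/-- **3-piece dissection of the `3 × 1` rectangle into a square.**  There are three closed
subsets of the plane with pairwise disjoint interiors whose union is the rectangle
`[0,3] × [0,1]`, together with three isometries of the plane such that the images of the
pieces have pairwise disjoint interiors and their union is the square `[0,√3] × [0,√3]`. -/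
theorem three_piece_rectangle_to_square :
    ∃ (P : Fin 3 → Set Plane) (g : Fin 3 → (Plane ≃ᵢ Plane)),
      (∀ i, IsClosed (P i)) ∧
      (⋃ i, P i) = rect 0 3 0 1 ∧
      (∀ i j, i ≠ j → interior (P i) ∩ interior (P j) = ∅) ∧
      (∀ i j, i ≠ j → interior (g i '' P i) ∩ interior (g j '' P j) = ∅) ∧
      (⋃ i, g i '' P i) = rect 0 (Real.sqrt 3) 0 (Real.sqrt 3) := by
  have hs : √3 * √3 = (3 : ℝ) := Real.mul_self_sqrt (by norm_num)
  have hs0 : 0 ≤ √3 := Real.sqrt_nonneg 3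
  generalize √3 = s at hs hs0
  have hs1 : 1 < s := by nlinarith
  have hs2 : s < 2 := by nlinarith
  refine ⟨slidePiece s, fun i => IsometryEquiv.addRight (slideVector s i),
    isClosed_slidePiece s, ?_, interior_inter_interior_eq_empty_fin_three ?_ ?_ ?_,
    interior_inter_interior_eq_empty_fin_three
      (P := fun i => IsometryEquiv.addRight (slideVector s i) '' slidePiece s i) ?_ ?_ ?_, ?_⟩
  · rw [iUnion_fin_three]
    ext p
    simp only [slidePiece, rect, Matrix.cons_val, mem_union, mem_ofPred_eq, mem_Icc]
    constructor
    · rintro ((⟨⟨h0, h0'⟩, ⟨h1, h1'⟩, h⟩ | ⟨h0, h1, h⟩) | ⟨h0, h1, h⟩) <;>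
        refine ⟨⟨?_, ?_⟩, ?_, ?_⟩ <;> nlinarith
    · grind
  · exact interior_inter_interior_eq_empty_of_line 1 0 s (by simp)
      (fun p hp => by linarith [hp.1.2]) (fun p hp => by linarith [hp.1])
  · exact interior_inter_interior_eq_empty_of_line 1 s 3 (by simp)
      (fun p hp => by linarith [hp.2.2]) (fun p hp => by linarith [hp.2.2])
  · exact interior_inter_interior_eq_empty_of_line 1 s 3 (by simp)
      (fun p hp => by linarith [hp.2.2]) (fun p hp => by linarith [hp.2.2])
  · simp only [image_slidePiece_zero, image_slidePiece_one]
    exact interior_inter_interior_eq_empty_of_line 0 1 1 (by simp)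
      (fun p hp => by linarith [hp.2.1.2]) (fun p hp => by linarith [hp.2.1])
  · simp only [image_slidePiece_zero, image_slidePiece_two hs]
    exact interior_inter_interior_eq_empty_of_line 1 s 3 (by simp)
      (fun p hp => by linarith [hp.2.2]) (fun p hp => by linarith [hp.2.2])
  · simp only [image_slidePiece_one, image_slidePiece_two hs]
    exact interior_inter_interior_eq_empty_of_line 1 s 3 (by simp)
      (fun p hp => by linarith [hp.2.2]) (fun p hp => by linarith [hp.2.2])
  · rw [iUnion_fin_three, image_slidePiece_zero, image_slidePiece_one, image_slidePiece_two hs]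
    ext p
    simp only [slidePiece, rect, Matrix.cons_val, mem_union, mem_ofPred_eq, mem_Icc]
    constructor
    · rintro ((⟨⟨h0, h0'⟩, ⟨h1, h1'⟩, h⟩ | ⟨h0, h1, h⟩) | ⟨h0, h1, h⟩) <;>
        refine ⟨⟨?_, ?_⟩, ?_, ?_⟩ <;> nlinarith
    · grind
end

section
/- There exists a 5-piece dissection of the square of side √3 into a unit square and a square of side √2: there are five closed subsets P₁,…,P₅ of ℝ² whose union is [0,√3]×[0,√3], with pairwise disjoint interiors, where P₁ is isometric to the unit square [0,1]×[0,1], together with five isometries g₁,…,g₅ of ℝ² such that the images gᵢ(Pᵢ) have pairwise disjoint interiors, g₁(P₁) = [0,1]×[0,1], and the union of the five images is the union of the two disjoint squares [0,1]×[0,1] and [2,2+√2]×[0,√2]. -/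
open Real Set

/-- The isometry `p ↦ (c p₀ + d p₁, -d p₀ + c p₁) + t` of the plane, for `c² + d² = 1`. -/
noncomputable def rigidMotion (c d : ℝ) (h : c ^ 2 + d ^ 2 = 1) (t : Plane) : Plane ≃ᵢ Plane :=
  IsometryEquiv.mk' (fun p => !₂[c * p 0 + d * p 1 + t 0, -d * p 0 + c * p 1 + t 1])
    (fun q => !₂[c * (q 0 - t 0) - d * (q 1 - t 1), d * (q 0 - t 0) + c * (q 1 - t 1)])
    (fun q => by
      ext i
      fin_cases i
      · simp
        linear_combination (q 0 - t 0) * h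
      · simp
        linear_combination (q 1 - t 1) * h)
    (Isometry.of_dist_eq fun p q => by
      simp only [EuclideanSpace.dist_eq, Fin.sum_univ_two, Real.dist_eq, sq_abs]
      congr 1
      simp
      linear_combination ((p 0 - q 0) ^ 2 + (p 1 - q 1) ^ 2) * h)

lemma rigidMotion_zero_coord (c d : ℝ) (h : c ^ 2 + d ^ 2 = 1) (t p : Plane) :
    rigidMotion c d h t p 0 = c * p 0 + d * p 1 + t 0 := rfl

lemma rigidMotion_one_coord (c d : ℝ) (h : c ^ 2 + d ^ 2 = 1) (t p : Plane) :
    rigidMotion c d h t p 1 = -d * p 0 + c * p 1 + t 1 := rfl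

/-- Two sets separated by a line have disjoint interiors. -/
lemma interior_inter_interior_eq_empty_of_separated_s8 {A B : Set Plane} (a b c : ℝ)
    (hab : a ^ 2 + b ^ 2 ≠ 0) (hA : ∀ p ∈ A, a * p 0 + b * p 1 ≤ c)
    (hB : ∀ p ∈ B, c ≤ a * p 0 + b * p 1) :
    interior A ∩ interior B = ∅ := by
  let f : Plane →L[ℝ] ℝ :=
    a • EuclideanSpace.proj (0 : Fin 2) + b • EuclideanSpace.proj (1 : Fin 2)
  have hf : ∀ p, f p = a * p 0 + b * p 1 := fun p => rfl
  have hf0 : f ≠ 0 := by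
    intro h
    have h' := hf !₂[a, b]
    rw [h] at h'
    apply hab
    simp at h'
    linear_combination -h'
  have hopen : IsOpen (f '' (interior A ∩ interior B)) :=
    f.isOpenMap_of_ne_zero hf0 _ (isOpen_interior.inter isOpen_interior)
  have hsub : f '' (interior A ∩ interior B) ⊆ {c} := by
    rintro _ ⟨p, ⟨hpA, hpB⟩, rfl⟩
    exact le_antisymm (hA p (interior_subset hpA)) (hB p (interior_subset hpB))
  have hempty := interior_mono hsub
  rw [hopen.interior_eq, interior_singleton] at hempty
  exact image_eq_empty.mp (subset_empty_iff.mp hempty)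

/-- The quadrilateral cut off a corner of the area-three square, in coordinates `a`, `b` centred
at the common centre and parallel to the sides of the unit square. -/
def InCorner (a b : ℝ) : Prop :=
  1 / 2 ≤ a ∧ -(1 / 2) ≤ b ∧ √2 * a - b ≤ 3 / 2 ∧ a + √2 * b ≤ 3 / 2

/-- The central unit square and its four corner quadrilaterals, which are quarter turns of
one another. -/
def tiles : Fin 5 → Set Plane :=
  ![{p | -(1 / 2) ≤ p 0 ∧ p 0 ≤ 1 / 2 ∧ -(1 / 2) ≤ p 1 ∧ p 1 ≤ 1 / 2},
    {p | InCorner (p 0) (p 1)}, {p | InCorner (p 1) (-p 0)},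
    {p | InCorner (-p 0) (-p 1)}, {p | InCorner (-p 1) (p 0)}]

/-- The translations that reassemble `tiles` into the two smaller squares. -/
noncomputable def shifts : Fin 5 → Plane :=
  ![!₂[1 / 2, 1 / 2], !₂[3 / 2, 1 / 2], !₂[3 / 2 + √2, -(1 / 2)],
    !₂[5 / 2 + √2, √2 - 1 / 2], !₂[5 / 2, √2 + 1 / 2]]

lemma sqrt_two_bounds : √2 * √2 = 2 ∧ 1.4 < √2 ∧ √2 < 1.5 :=
  ⟨Real.mul_self_sqrt (by norm_num), Real.lt_sqrt_of_sq_lt (by norm_num),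
    (Real.sqrt_lt' (by norm_num)).mpr (by norm_num)⟩

lemma InCorner.bounds {a b : ℝ} (h : InCorner a b) :
    a ≤ (√2 + 1) / 2 ∧ b ≤ √2 / 2 := by
  obtain ⟨h2, hl, hu⟩ := sqrt_two_bounds
  obtain ⟨ha, hb, h₁, h₂⟩ := h
  constructor <;> nlinarith

/-- The area-three square in rotated coordinates. -/
def InBig (a b : ℝ) : Prop :=
  (-(3 / 2) ≤ √2 * a - b ∧ √2 * a - b ≤ 3 / 2) ∧ -(3 / 2) ≤ a + √2 * b ∧ a + √2 * b ≤ 3 / 2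

lemma InCorner.inBig {a b : ℝ} (h : InCorner a b) : InBig a b := by
  obtain ⟨h2, hl, hu⟩ := sqrt_two_bounds
  obtain ⟨-, hb'⟩ := h.bounds
  obtain ⟨ha, hb, h₁, h₂⟩ := h
  refine ⟨⟨?_, h₁⟩, ?_, h₂⟩ <;> nlinarith

lemma inBig_quarter_turn {a b : ℝ} : InBig b (-a) ↔ InBig a b := by
  unfold InBig
  constructor <;> rintro ⟨⟨h₁, h₂⟩, h₃, h₄⟩ <;> refine ⟨⟨?_, ?_⟩, ?_, ?_⟩ <;> linarith

/-- The area-three square is the union of the unit square and the four corners. -/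
lemma inBig_iff {a b : ℝ} : InBig a b ↔
    (-(1 / 2) ≤ a ∧ a ≤ 1 / 2 ∧ -(1 / 2) ≤ b ∧ b ≤ 1 / 2) ∨ InCorner a b ∨ InCorner b (-a) ∨
      InCorner (-a) (-b) ∨ InCorner (-b) a := by
  obtain ⟨h2, hl, hu⟩ := sqrt_two_bounds
  constructor
  · rintro ⟨⟨h₁, h₂⟩, h₃, h₄⟩
    unfold InCorner
    grind
  · rintro (⟨h₁, h₂, h₃, h₄⟩ | h | h | h | h)
    · refine ⟨⟨?_, ?_⟩, ?_, ?_⟩ <;> nlinarith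
    · exact h.inBig
    · exact inBig_quarter_turn.mp h.inBig
    · exact inBig_quarter_turn.mp (inBig_quarter_turn.mp h.inBig)
    · simpa using inBig_quarter_turn.mpr h.inBig

/-- The translated corners fill the area-two square. -/
lemma shifted_corners_iff {x y : ℝ} :
    (InCorner (x - 3 / 2) (y - 1 / 2) ∨ InCorner (y - -(1 / 2)) (-(x - (3 / 2 + √2))) ∨
      InCorner (-(x - (5 / 2 + √2))) (-(y - (√2 - 1 / 2))) ∨
      InCorner (-(y - (√2 + 1 / 2))) (x - 5 / 2)) ↔
    (2 ≤ x ∧ x ≤ 2 + √2) ∧ 0 ≤ y ∧ y ≤ √2 := by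
  obtain ⟨h2, hl, hu⟩ := sqrt_two_bounds
  constructor
  · rintro (h | h | h | h) <;> obtain ⟨h₁, h₂⟩ := h.bounds <;> obtain ⟨h₃, h₄, -, -⟩ := h <;>
      refine ⟨⟨?_, ?_⟩, ?_, ?_⟩ <;> linarith
  · rintro ⟨⟨h₁, h₂⟩, h₃, h₄⟩
    unfold InCorner
    rcases le_total (√2 * (x - 3 / 2) - (y - 1 / 2)) (3 / 2) with h | h <;>
      rcases le_total ((x - 3 / 2) + √2 * (y - 1 / 2)) (3 / 2) with h' | h'
    · left
      refine ⟨?_, ?_, ?_, ?_⟩ <;> linarith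
    · right; right; right
      refine ⟨?_, ?_, ?_, ?_⟩ <;> linarith
    · right; left
      refine ⟨?_, ?_, ?_, ?_⟩ <;> linarith
    · right; right; left
      refine ⟨?_, ?_, ?_, ?_⟩ <;> linarith

/-- Pairwise disjointness of interiors follows from a separating line for each increasing pair. -/
lemma pairwise_interior_inter_eq_empty {A : Fin 5 → Set Plane}
    (h : ∀ i j, i < j → ∃ a b c : ℝ, a ^ 2 + b ^ 2 ≠ 0 ∧
      (∀ p ∈ A i, a * p 0 + b * p 1 ≤ c) ∧ ∀ p ∈ A j, c ≤ a * p 0 + b * p 1) (i j : Fin 5)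
    (hij : i ≠ j) : interior (A i) ∩ interior (A j) = ∅ := by
  rcases lt_or_gt_of_ne hij with hlt | hlt
  · obtain ⟨a, b, c, hab, hi, hj⟩ := h i j hlt
    exact interior_inter_interior_eq_empty_of_separated_s8 a b c hab hi hj
  · obtain ⟨a, b, c, hab, hj, hi⟩ := h j i hlt
    rw [inter_comm]
    exact interior_inter_interior_eq_empty_of_separated_s8 a b c hab hj hi

lemma tiles_separated (i j : Fin 5) (hij : i < j) : ∃ a b c : ℝ, a ^ 2 + b ^ 2 ≠ 0 ∧
    (∀ p ∈ tiles i, a * p 0 + b * p 1 ≤ c) ∧ ∀ p ∈ tiles j, c ≤ a * p 0 + b * p 1 := by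
  fin_cases i <;> fin_cases j <;> try exact absurd hij (by decide)
  · refine ⟨1, 0, 1 / 2, by norm_num, ?_, ?_⟩ <;> rintro p ⟨h₁, h₂, h₃, h₄⟩ <;> linarith
  · refine ⟨0, 1, 1 / 2, by norm_num, ?_, ?_⟩ <;> rintro p ⟨h₁, h₂, h₃, h₄⟩ <;> linarith
  · refine ⟨-1, 0, 1 / 2, by norm_num, ?_, ?_⟩ <;> rintro p ⟨h₁, h₂, h₃, h₄⟩ <;> linarith
  · refine ⟨0, -1, 1 / 2, by norm_num, ?_, ?_⟩ <;> rintro p ⟨h₁, h₂, h₃, h₄⟩ <;> linarith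
  · refine ⟨-1, 0, -(1 / 2), by norm_num, ?_, ?_⟩ <;> rintro p ⟨h₁, h₂, h₃, h₄⟩ <;> linarith
  · refine ⟨-1, 0, 0, by norm_num, ?_, ?_⟩ <;> rintro p ⟨h₁, h₂, h₃, h₄⟩ <;> linarith
  · refine ⟨0, -1, 1 / 2, by norm_num, ?_, ?_⟩ <;> rintro p ⟨h₁, h₂, h₃, h₄⟩ <;> linarith
  · refine ⟨0, -1, -(1 / 2), by norm_num, ?_, ?_⟩ <;> rintro p ⟨h₁, h₂, h₃, h₄⟩ <;> linarith
  · refine ⟨0, -1, 0, by norm_num, ?_, ?_⟩ <;> rintro p ⟨h₁, h₂, h₃, h₄⟩ <;> linarith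
  · refine ⟨1, 0, -(1 / 2), by norm_num, ?_, ?_⟩ <;> rintro p ⟨h₁, h₂, h₃, h₄⟩ <;> linarith

/-- The tiles after reassembly. -/
def shiftedTiles (i : Fin 5) : Set Plane := {q | q - shifts i ∈ tiles i}

lemma mem_shiftedTiles {q : Plane} :
    (q ∈ shiftedTiles 0 ↔ q ∈ rect 0 1 0 1) ∧
    (q ∈ shiftedTiles 1 ↔ InCorner (q 0 - 3 / 2) (q 1 - 1 / 2)) ∧
    (q ∈ shiftedTiles 2 ↔ InCorner (q 1 - -(1 / 2)) (-(q 0 - (3 / 2 + √2)))) ∧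
    (q ∈ shiftedTiles 3 ↔ InCorner (-(q 0 - (5 / 2 + √2))) (-(q 1 - (√2 - 1 / 2)))) ∧
    (q ∈ shiftedTiles 4 ↔ InCorner (-(q 1 - (√2 + 1 / 2))) (q 0 - 5 / 2)) := by
  refine ⟨?_, Iff.rfl, Iff.rfl, Iff.rfl, Iff.rfl⟩
  change (-(1 / 2) ≤ q 0 - 1 / 2 ∧ q 0 - 1 / 2 ≤ 1 / 2 ∧ -(1 / 2) ≤ q 1 - 1 / 2 ∧
    q 1 - 1 / 2 ≤ 1 / 2) ↔ (0 ≤ q 0 ∧ q 0 ≤ 1) ∧ 0 ≤ q 1 ∧ q 1 ≤ 1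
  grind

lemma iUnion_shiftedTiles :
    ⋃ i, shiftedTiles i = rect 0 1 0 1 ∪ rect 2 (2 + √2) 0 √2 := by
  ext q
  obtain ⟨h0, h1, h2, h3, h4⟩ := mem_shiftedTiles (q := q)
  have hsquare : q ∈ rect 2 (2 + √2) 0 √2 ↔ _ := (shifted_corners_iff (x := q 0) (y := q 1)).symm
  rw [mem_union, hsquare, ← h0, ← h1, ← h2, ← h3, ← h4, mem_iUnion]
  simp [Fin.exists_fin_succ]

lemma shiftedTiles_separated (i j : Fin 5) (hij : i < j) : ∃ a b c : ℝ, a ^ 2 + b ^ 2 ≠ 0 ∧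
    (∀ q ∈ shiftedTiles i, a * q 0 + b * q 1 ≤ c) ∧
    ∀ q ∈ shiftedTiles j, c ≤ a * q 0 + b * q 1 := by
  obtain ⟨hs, hl, hu⟩ := sqrt_two_bounds
  have hzero : ∀ q ∈ shiftedTiles 0, 1 * q 0 + 0 * q 1 ≤ 1 := fun q hq => by
    obtain ⟨⟨-, h⟩, -⟩ := mem_shiftedTiles.1.mp hq
    linarith
  have hcorner : ∀ q, q ∈ rect 2 (2 + √2) 0 √2 → 1 ≤ 1 * q 0 + 0 * q 1 := fun q hq => by
    obtain ⟨⟨h, -⟩, -⟩ := hq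
    linarith
  have hpos : √2 ^ 2 + (-1) ^ 2 ≠ 0 := by positivity
  have hpos' : 1 ^ 2 + √2 ^ 2 ≠ 0 := by positivity
  have hneg : (-√2) ^ 2 + 1 ^ 2 ≠ 0 := by positivity
  fin_cases i <;> fin_cases j <;> try exact absurd hij (by decide)
  · exact ⟨1, 0, 1, by norm_num, hzero,
      fun q h => hcorner q (shifted_corners_iff.mp (Or.inl h))⟩
  · exact ⟨1, 0, 1, by norm_num, hzero,
      fun q h => hcorner q (shifted_corners_iff.mp (Or.inr (Or.inl h)))⟩
  · exact ⟨1, 0, 1, by norm_num, hzero,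
      fun q h => hcorner q (shifted_corners_iff.mp (Or.inr (Or.inr (Or.inl h))))⟩
  · exact ⟨1, 0, 1, by norm_num, hzero,
      fun q h => hcorner q (shifted_corners_iff.mp (Or.inr (Or.inr (Or.inr h))))⟩
  · refine ⟨√2, -1, √2 * (3 / 2) + 1, hpos, ?_, ?_⟩ <;> rintro q ⟨-, -, h₁, h₂⟩ <;>
      simp [shifts] at h₁ h₂ <;> linarith
  · refine ⟨√2, -1, √2 * (3 / 2) + 1, hpos, ?_, ?_⟩ <;> rintro q ⟨-, -, h₁, h₂⟩ <;>
      simp [shifts] at h₁ h₂ <;> linarith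
  · refine ⟨1, √2, 3 + √2 * (1 / 2), hpos', ?_, ?_⟩ <;> rintro q ⟨-, -, h₁, h₂⟩ <;>
      simp [shifts] at h₁ h₂ <;> linarith
  · refine ⟨1, √2, 3 + √2 * (1 / 2), hpos', ?_, ?_⟩ <;> rintro q ⟨-, -, h₁, h₂⟩ <;>
      simp [shifts] at h₁ h₂ <;> linarith
  · refine ⟨-√2, 1, -(√2 * (3 / 2) + 1), hneg, ?_, ?_⟩ <;> rintro q ⟨-, -, h₁, h₂⟩ <;>
      simp [shifts] at h₁ h₂ <;> linarith
  · refine ⟨-√2, 1, -(√2 * (3 / 2) + 1), hneg, ?_, ?_⟩ <;> rintro q ⟨-, -, h₁, h₂⟩ <;>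
      simp [shifts] at h₁ h₂ <;> linarith

lemma isClosed_tiles (i : Fin 5) : IsClosed (tiles i) := by
  fin_cases i <;>
    refine IsClosed.and ?_ (IsClosed.and ?_ (IsClosed.and ?_ ?_)) <;>
    exact isClosed_le (by fun_prop) (by fun_prop)

/-- The isometry from the axis-parallel area-three square to the rotated coordinates. -/
noncomputable def frame : Plane ≃ᵢ Plane :=
  rigidMotion (√2 * √3 / 3) (√3 / 3)
    (by
      have h2 : √2 ^ 2 = 2 := Real.sq_sqrt (by norm_num)
      have h3 : √3 ^ 2 = 3 := Real.sq_sqrt (by norm_num)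
      linear_combination (√3 ^ 2 / 9) * h2 + h3 / 3)
    !₂[-(√2 + 1) / 2, (1 - √2) / 2]

lemma frame_preimage_big : frame ⁻¹' {p | InBig (p 0) (p 1)} = rect 0 √3 0 √3 := by
  have h2 : √2 * √2 = 2 := Real.mul_self_sqrt (by norm_num)
  have h3 : √3 * √3 = 3 := Real.mul_self_sqrt (by norm_num)
  have hpos : 0 < √3 := by positivity
  ext p
  have hx : √2 * frame p 0 - frame p 1 = √3 * p 0 - 3 / 2 := by
    simp only [frame, rigidMotion_zero_coord, rigidMotion_one_coord]
    simp
    linear_combination (√3 / 3 * p 0 - 1 / 2) * h2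
  have hy : frame p 0 + √2 * frame p 1 = √3 * p 1 - 3 / 2 := by
    simp only [frame, rigidMotion_zero_coord, rigidMotion_one_coord]
    simp
    linear_combination (√3 / 3 * p 1 - 1 / 2) * h2
  have key : ∀ x : ℝ, (-(3 / 2) ≤ √3 * x - 3 / 2 ∧ √3 * x - 3 / 2 ≤ 3 / 2) ↔ 0 ≤ x ∧ x ≤ √3 := by
    intro x
    refine and_congr ?_ ?_ <;> constructor <;> intro h <;> nlinarith
  change InBig (frame p 0) (frame p 1) ↔ (0 ≤ p 0 ∧ p 0 ≤ √3) ∧ 0 ≤ p 1 ∧ p 1 ≤ √3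
  rw [InBig, hx, hy, key, key]

lemma iUnion_tiles : ⋃ i, tiles i = {p | InBig (p 0) (p 1)} := by
  ext p
  rw [mem_iUnion]
  simp only [Fin.exists_fin_succ, IsEmpty.exists_iff, or_false]
  exact (inBig_iff (a := p 0) (b := p 1)).symm

/-- **5-piece dissection of the square of side `√3` into a unit square and a square of side
`√2`.**  There are five closed subsets of the plane with pairwise disjoint interiors whose
union is `[0,√3] × [0,√3]`, where the first piece is isometric to the unit square
`[0,1] × [0,1]`, together with five isometries of the plane such that the images of the
pieces have pairwise disjoint interiors, the image of the first piece is `[0,1] × [0,1]`,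
and the union of the five images is the union of the two disjoint squares `[0,1] × [0,1]`
and `[2, 2+√2] × [0,√2]`. -/
theorem five_piece_dissection_sqrt3_to_one_and_sqrt2 :
    ∃ (P : Fin 5 → Set Plane) (g : Fin 5 → (Plane ≃ᵢ Plane)),
      (∀ i, IsClosed (P i)) ∧
      (⋃ i, P i) = rect 0 (Real.sqrt 3) 0 (Real.sqrt 3) ∧
      (∀ i j, i ≠ j → interior (P i) ∩ interior (P j) = ∅) ∧
      (∃ e : Plane ≃ᵢ Plane, e '' P 0 = rect 0 1 0 1) ∧
      (∀ i j, i ≠ j → interior (g i '' P i) ∩ interior (g j '' P j) = ∅) ∧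
      g 0 '' P 0 = rect 0 1 0 1 ∧
      (⋃ i, g i '' P i) =
        rect 0 1 0 1 ∪ rect 2 (2 + Real.sqrt 2) 0 (Real.sqrt 2) := by
  have himage : ∀ i, frame.trans (IsometryEquiv.subRight (shifts i)).symm '' (frame ⁻¹' tiles i) =
      shiftedTiles i := by
    intro i
    change (IsometryEquiv.subRight (shifts i)).symm ∘ frame '' _ = _
    rw [image_comp, image_preimage_eq _ frame.surjective]
    exact congrFun (IsometryEquiv.subRight (shifts i)).image_symm (tiles i)
  have hunit : shiftedTiles 0 = rect 0 1 0 1 := ext fun q => mem_shiftedTiles.1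
  refine ⟨fun i => frame ⁻¹' tiles i, fun i => frame.trans (IsometryEquiv.subRight (shifts i)).symm,
    fun i => (isClosed_tiles i).preimage frame.continuous, ?_, ?_, ⟨_, (himage 0).trans hunit⟩,
    ?_, (himage 0).trans hunit, ?_⟩
  · rw [← preimage_iUnion, iUnion_tiles, frame_preimage_big]
  · intro i j hij
    have h := pairwise_interior_inter_eq_empty tiles_separated i j hij
    simp only [← IsometryEquiv.coe_toHomeomorph, ← Homeomorph.preimage_interior]
    rw [← preimage_inter, h, preimage_empty]
  · intro i j hij
    simp only [himage]
    exact pairwise_interior_inter_eq_empty shiftedTiles_separated i j hij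
  · simp only [himage]
    exact iUnion_shiftedTiles
end
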